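/- Let (N_k)_{k≥0} be a sequence of positive reals which is log-convex (N_k^2 ≤ N_{k-1} N_{k+1} for all k ≥ 1), set m_k = N_{k+1}/N_k, and define g : ℝ → ℝ by g(x) = Σ_{k=0}^{∞} (N_k / (2 m_k)^k) · ( cos(2 m_k x) + sin(2 m_k x) ). Then this series converges, g is C^∞ on ℝ, |g^{(n)}(x)| ≤ 2^{n+2} N_n for every n ≥ 0 and every x ∈ ℝ, and |g^{(n)}(0)| = Σ_{k=0}^{∞} N_k / (2 m_k)^{k−n} ≥ N_n for every n ≥ 0. -/

import Mathlib

/-!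
For increasing quotients `m k = N (k + 1) / N k`, the sequence `N` lies above the geometric
sequence of ratio `m k` that passes through its `k`-th term, i.e. `N k * m k ^ n ≤ N n * m k ^ k`.
Differentiating the `k`-th term of the series `n` times multiplies its amplitude
`N k / (2 * m k) ^ k` by `(2 * m k) ^ n`, so the comparison bounds the result by
`2 ^ n * N n / 2 ^ k`. At `0` every derivative of `cos + sin` is `1` or `-1`, with a sign that does
not depend on `k`; nothing cancels, and the `n`-th term alone contributes `N n`.
-/

section DilationSeries

variable {ι 𝕜 F : Type*} [RCLike 𝕜] [NormedAddCommGroup F] [NormedSpace 𝕜 F]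

theorem iteratedDeriv_tsum [CompleteSpace F] {f : ι → 𝕜 → F} {v : ℕ → ι → ℝ} {N : ℕ∞}
    (hf : ∀ i, ContDiff 𝕜 N (f i)) (hv : ∀ n : ℕ, n ≤ N → Summable (v n))
    (hbound : ∀ (n : ℕ) (i : ι) (x : 𝕜), n ≤ N → ‖iteratedDeriv n (f i) x‖ ≤ v n i)
    {n : ℕ} (hn : n ≤ N) :
    iteratedDeriv n (fun x => ∑' i, f i x) = fun x => ∑' i, iteratedDeriv n (f i) x := by
  simp only [← norm_iteratedFDeriv_eq_norm_iteratedDeriv] at hbound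
  funext x
  simp only [iteratedDeriv_eq_equiv_comp, Function.comp_apply,
    iteratedFDeriv_tsum hf hv hbound hn]
  exact ContinuousLinearEquiv.map_tsum
    (ContinuousMultilinearMap.piFieldEquiv 𝕜 (Fin n) F).symm.toContinuousLinearEquiv

/-- The superposition `∑ c k • φ (a k * x)` of dilates of a profile `φ`, with amplitudes `c` and
frequencies `a`; it takes the junk value `0` where the series diverges. -/
noncomputable def dilationSeries (c a : ι → 𝕜) (φ : 𝕜 → F) (x : 𝕜) : F :=
  ∑' k, c k • φ (a k * x)

variable {c a : ι → 𝕜} {φ : 𝕜 → F}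

theorem norm_dilationSeries_term_le {C : ℝ} (hφ : ∀ y, ‖φ y‖ ≤ C) (k : ι) (x : 𝕜) :
    ‖c k • φ (a k * x)‖ ≤ ‖c k‖ * C := by
  rw [norm_smul]
  gcongr
  exact hφ _

theorem summable_dilationSeries_term [CompleteSpace F] {C : ℝ} (hφ : ∀ y, ‖φ y‖ ≤ C)
    (hc : Summable fun k => ‖c k‖) (x : 𝕜) : Summable fun k => c k • φ (a k * x) :=
  .of_norm_bounded (hc.mul_right C) fun k => norm_dilationSeries_term_le hφ k x

theorem norm_dilationSeries_le {C : ℝ} (hφ : ∀ y, ‖φ y‖ ≤ C) (hc : Summable fun k => ‖c k‖)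
    (x : 𝕜) : ‖dilationSeries c a φ x‖ ≤ (∑' k, ‖c k‖) * C :=
  tsum_of_norm_bounded (hc.hasSum.mul_right C) fun k => norm_dilationSeries_term_le hφ k x

theorem dilationSeries_zero (hc : Summable c) :
    dilationSeries c a φ 0 = (∑' k, c k) • φ 0 := by
  simp only [dilationSeries, mul_zero, hc.tsum_smul_const]

theorem iteratedDeriv_dilationSeries_term {n : ℕ} (hφ : ContDiff 𝕜 n φ) (k : ι) (x : 𝕜) :
    iteratedDeriv n (fun y => c k • φ (a k * y)) x =
      (c k * a k ^ n) • iteratedDeriv n φ (a k * x) := by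
  rw [iteratedDeriv_fun_const_smul_field, iteratedDeriv_comp_const_smul hφ, smul_smul]

variable {N : ℕ∞} {C : ℕ → ℝ}

theorem norm_iteratedDeriv_dilationSeries_term_le (hφ : ContDiff 𝕜 N φ)
    (hC : ∀ n : ℕ, n ≤ N → ∀ y, ‖iteratedDeriv n φ y‖ ≤ C n) (n : ℕ) (k : ι) (x : 𝕜)
    (hn : n ≤ N) :
    ‖iteratedDeriv n (fun y => c k • φ (a k * y)) x‖ ≤ ‖c k * a k ^ n‖ * C n := by
  rw [iteratedDeriv_dilationSeries_term (hφ.of_le (mod_cast hn))]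
  exact norm_dilationSeries_term_le (c := fun k => c k * a k ^ n) (hC n hn) k x

theorem iteratedDeriv_dilationSeries [CompleteSpace F] (hφ : ContDiff 𝕜 N φ)
    (hC : ∀ n : ℕ, n ≤ N → ∀ y, ‖iteratedDeriv n φ y‖ ≤ C n)
    (hs : ∀ n : ℕ, n ≤ N → Summable fun k => ‖c k * a k ^ n‖) {n : ℕ} (hn : n ≤ N) :
    iteratedDeriv n (dilationSeries c a φ) =
      dilationSeries (fun k => c k * a k ^ n) a (iteratedDeriv n φ) := by
  refine (iteratedDeriv_tsum (fun k => by fun_prop) (fun n hn => (hs n hn).mul_right (C n))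
    (norm_iteratedDeriv_dilationSeries_term_le hφ hC) hn).trans ?_
  funext x
  exact tsum_congr fun k => iteratedDeriv_dilationSeries_term (hφ.of_le (mod_cast hn)) k x

theorem contDiff_dilationSeries [CompleteSpace F] (hφ : ContDiff 𝕜 N φ)
    (hC : ∀ n : ℕ, n ≤ N → ∀ y, ‖iteratedDeriv n φ y‖ ≤ C n)
    (hs : ∀ n : ℕ, n ≤ N → Summable fun k => ‖c k * a k ^ n‖) :
    ContDiff 𝕜 N (dilationSeries c a φ) := by
  refine contDiff_tsum (fun k => by fun_prop) (fun n hn => (hs n hn).mul_right (C n))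
    fun n k x hn => ?_
  rw [norm_iteratedFDeriv_eq_norm_iteratedDeriv]
  exact norm_iteratedDeriv_dilationSeries_term_le hφ hC n k x hn

end DilationSeries

section CosAddSin

theorem iteratedDeriv_cos_add_sin (n : ℕ) (x : ℝ) :
    iteratedDeriv n (Real.cos + Real.sin) x =
      iteratedDeriv n Real.cos x + iteratedDeriv n Real.sin x :=
  iteratedDeriv_add Real.contDiff_cos.contDiffAt Real.contDiff_sin.contDiffAt

theorem norm_iteratedDeriv_cos_add_sin_le (n : ℕ) (x : ℝ) :
    ‖iteratedDeriv n (Real.cos + Real.sin) x‖ ≤ 2 := by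
  rw [iteratedDeriv_cos_add_sin, Real.norm_eq_abs]
  linarith [abs_add_le (iteratedDeriv n Real.cos x) (iteratedDeriv n Real.sin x),
    Real.abs_iteratedDeriv_cos_le_one n x, Real.abs_iteratedDeriv_sin_le_one n x]

theorem norm_iteratedDeriv_cos_add_sin_zero (n : ℕ) :
    ‖iteratedDeriv n (Real.cos + Real.sin) 0‖ = 1 := by
  rw [iteratedDeriv_cos_add_sin]
  obtain ⟨j, rfl | rfl⟩ := n.even_or_odd' <;> simp

end CosAddSin

section SuccRatio

/-- The quotients `m k = N (k + 1) / N k` of successive terms of a sequence. -/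
noncomputable def succRatio (N : ℕ → ℝ) (k : ℕ) : ℝ :=
  N (k + 1) / N k

/-- The coefficient of the term of frequency `r * m k` in the series, where `m = succRatio N`. The
paper has `r = 2`; the differentiated series converge for every `r > 1`. -/
noncomputable def amplitude (r : ℝ) (N : ℕ → ℝ) (k : ℕ) : ℝ :=
  N k / (r * succRatio N k) ^ k

variable {N : ℕ → ℝ} {r : ℝ}

theorem succRatio_pos (hN : ∀ k, 0 < N k) (k : ℕ) : 0 < succRatio N k :=
  div_pos (hN _) (hN _)

theorem succRatio_mul_self (hN : ∀ k, 0 < N k) (k : ℕ) : succRatio N k * N k = N (k + 1) :=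
  div_mul_cancel₀ _ (hN k).ne'

theorem monotone_succRatio_of_logConvex (hN : ∀ k, 0 < N k)
    (hlogconv : ∀ k : ℕ, 1 ≤ k → N k ^ 2 ≤ N (k - 1) * N (k + 1)) : Monotone (succRatio N) := by
  refine monotone_nat_of_le_succ fun k => ?_
  rw [succRatio, succRatio, div_le_div_iff₀ (hN _) (hN _), ← sq, mul_comm]
  exact hlogconv (k + 1) k.succ_pos

theorem mul_succRatio_pow_le (hN : ∀ k, 0 < N k) (hmono : Monotone (succRatio N)) (k n : ℕ) :
    N k * succRatio N k ^ n ≤ N n * succRatio N k ^ k := by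
  have hk := succRatio_pos hN k
  rcases le_total k n with h | h <;> obtain ⟨d, rfl⟩ := Nat.exists_eq_add_of_le h
  · have hgrowth : succRatio N k ^ d * N k ≤ N (k + d) :=
      geom_le (u := fun j => N (k + j)) hk.le d fun j _ => by
        rw [← add_assoc, ← succRatio_mul_self hN (k + j)]
        exact mul_le_mul_of_nonneg_right (hmono (Nat.le_add_right k j)) (hN _).le
    calc N k * succRatio N k ^ (k + d) = succRatio N k ^ d * N k * succRatio N k ^ k := by ring
      _ ≤ N (k + d) * succRatio N k ^ k := by gcongr
  · have hgrowth : N (n + d) ≤ succRatio N (n + d) ^ d * N n :=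
      le_geom (u := fun j => N (n + j)) hk.le d fun j hj => by
        rw [← add_assoc, ← succRatio_mul_self hN (n + j)]
        exact mul_le_mul_of_nonneg_right (hmono (Nat.add_le_add_left hj.le n)) (hN _).le
    calc N (n + d) * succRatio N (n + d) ^ n
        ≤ succRatio N (n + d) ^ d * N n * succRatio N (n + d) ^ n := by gcongr
      _ = N n * succRatio N (n + d) ^ (n + d) := by ring

theorem amplitude_mul_pow_nonneg (hN : ∀ k, 0 < N k) (hr : 0 ≤ r) (n k : ℕ) :
    0 ≤ amplitude r N k * (r * succRatio N k) ^ n := by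
  have hfreq : 0 ≤ r * succRatio N k := mul_nonneg hr (succRatio_pos hN k).le
  exact mul_nonneg (div_nonneg (hN k).le (pow_nonneg hfreq k)) (pow_nonneg hfreq n)

theorem norm_amplitude_mul_pow (hN : ∀ k, 0 < N k) (hr : 0 ≤ r) (n k : ℕ) :
    ‖amplitude r N k * (r * succRatio N k) ^ n‖ = amplitude r N k * (r * succRatio N k) ^ n :=
  Real.norm_of_nonneg (amplitude_mul_pow_nonneg hN hr n k)

theorem amplitude_mul_pow_eq_div_zpow (hN : ∀ k, 0 < N k) (hr : r ≠ 0) (n k : ℕ) :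
    amplitude r N k * (r * succRatio N k) ^ n = N k / (r * succRatio N k) ^ ((k : ℤ) - n) := by
  rw [zpow_sub₀ (mul_ne_zero hr (succRatio_pos hN k).ne'), zpow_natCast, zpow_natCast,
    div_div_eq_mul_div, amplitude, div_mul_eq_mul_div]

theorem amplitude_mul_pow_le (hN : ∀ k, 0 < N k) (hmono : Monotone (succRatio N)) (hr : 0 < r)
    (n k : ℕ) : amplitude r N k * (r * succRatio N k) ^ n ≤ r ^ n * N n * r⁻¹ ^ k := by
  have hk := succRatio_pos hN k
  calc amplitude r N k * (r * succRatio N k) ^ n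
      = N k * succRatio N k ^ n * (r ^ n / (r * succRatio N k) ^ k) := by
        rw [amplitude, mul_pow r _ n]
        ring
    _ ≤ N n * succRatio N k ^ k * (r ^ n / (r * succRatio N k) ^ k) := by
        gcongr ?_ * _
        exact mul_succRatio_pow_le hN hmono k n
    _ = r ^ n * N n * r⁻¹ ^ k := by
        rw [mul_pow, inv_pow]
        field_simp

theorem hasSum_mul_inv_pow (A : ℝ) (hr : 1 < r) :
    HasSum (fun k => A * r⁻¹ ^ k) (A * (1 - r⁻¹)⁻¹) :=
  (hasSum_geometric_of_lt_one (by positivity) (inv_lt_one_of_one_lt₀ hr)).mul_left A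

theorem summable_amplitude_mul_pow (hN : ∀ k, 0 < N k) (hmono : Monotone (succRatio N))
    (hr : 1 < r) (n : ℕ) : Summable fun k => amplitude r N k * (r * succRatio N k) ^ n :=
  have hr₀ := zero_lt_one.trans hr
  .of_nonneg_of_le (amplitude_mul_pow_nonneg hN hr₀.le n) (amplitude_mul_pow_le hN hmono hr₀ n)
    (hasSum_mul_inv_pow _ hr).summable

theorem tsum_amplitude_mul_pow_le (hN : ∀ k, 0 < N k) (hmono : Monotone (succRatio N))
    (hr : 1 < r) (n : ℕ) :
    ∑' k, amplitude r N k * (r * succRatio N k) ^ n ≤ r ^ n * N n * (1 - r⁻¹)⁻¹ :=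
  hasSum_le (amplitude_mul_pow_le hN hmono (zero_lt_one.trans hr) n)
    (summable_amplitude_mul_pow hN hmono hr n).hasSum (hasSum_mul_inv_pow _ hr)

theorem le_tsum_amplitude_mul_pow (hN : ∀ k, 0 < N k) (hmono : Monotone (succRatio N))
    (hr : 1 < r) (n : ℕ) : N n ≤ ∑' k, amplitude r N k * (r * succRatio N k) ^ n := by
  have hr₀ := zero_lt_one.trans hr
  calc N n = amplitude r N n * (r * succRatio N n) ^ n := by
        rw [amplitude_mul_pow_eq_div_zpow hN hr₀.ne', sub_self, zpow_zero, div_one]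
    _ ≤ ∑' k, amplitude r N k * (r * succRatio N k) ^ n :=
        (summable_amplitude_mul_pow hN hmono hr n).le_tsum n
          fun k _ => amplitude_mul_pow_nonneg hN hr₀.le n k

end SuccRatio

section RatioSeries

variable {F : Type*} [NormedAddCommGroup F] [NormedSpace ℝ F]

/-- The series `∑ N k / (r * m k) ^ k • φ (r * m k * x)`, `m = succRatio N`, whose `n`-th derivative
has size comparable to `N n`. The paper has `r = 2` and `φ = cos + sin`. -/
noncomputable def ratioSeries (r : ℝ) (N : ℕ → ℝ) (φ : ℝ → F) : ℝ → F :=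
  dilationSeries (amplitude r N) (fun k => r * succRatio N k) φ

variable [CompleteSpace F] {N : ℕ → ℝ} {r : ℝ} {φ : ℝ → F} {C : ℕ → ℝ}

theorem summable_ratioSeries_term (hN : ∀ k, 0 < N k) (hmono : Monotone (succRatio N))
    (hr : 1 < r) {B : ℝ} (hB : ∀ y, ‖φ y‖ ≤ B) (x : ℝ) :
    Summable fun k => amplitude r N k • φ (r * succRatio N k * x) :=
  summable_dilationSeries_term hB
    (by simpa only [pow_zero, mul_one] using (summable_amplitude_mul_pow hN hmono hr 0).norm) x

theorem contDiff_ratioSeries (hN : ∀ k, 0 < N k) (hmono : Monotone (succRatio N)) (hr : 1 < r)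
    (hφ : ContDiff ℝ (⊤ : ℕ∞) φ) (hC : ∀ n y, ‖iteratedDeriv n φ y‖ ≤ C n) :
    ContDiff ℝ (⊤ : ℕ∞) (ratioSeries r N φ) :=
  contDiff_dilationSeries hφ (fun n _ => hC n)
    fun n _ => (summable_amplitude_mul_pow hN hmono hr n).norm

theorem iteratedDeriv_ratioSeries (hN : ∀ k, 0 < N k) (hmono : Monotone (succRatio N))
    (hr : 1 < r) (hφ : ContDiff ℝ (⊤ : ℕ∞) φ) (hC : ∀ n y, ‖iteratedDeriv n φ y‖ ≤ C n) (n : ℕ) :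
    iteratedDeriv n (ratioSeries r N φ) =
      dilationSeries (fun k => amplitude r N k * (r * succRatio N k) ^ n)
        (fun k => r * succRatio N k) (iteratedDeriv n φ) :=
  iteratedDeriv_dilationSeries hφ (fun n _ => hC n)
    (fun n _ => (summable_amplitude_mul_pow hN hmono hr n).norm) le_top

theorem norm_iteratedDeriv_ratioSeries_le (hN : ∀ k, 0 < N k) (hmono : Monotone (succRatio N))
    (hr : 1 < r) (hφ : ContDiff ℝ (⊤ : ℕ∞) φ) (hC : ∀ n y, ‖iteratedDeriv n φ y‖ ≤ C n) (n : ℕ)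
    (x : ℝ) :
    ‖iteratedDeriv n (ratioSeries r N φ) x‖ ≤ r ^ n * N n * (1 - r⁻¹)⁻¹ * C n := by
  rw [iteratedDeriv_ratioSeries hN hmono hr hφ hC]
  refine (norm_dilationSeries_le (hC n) (summable_amplitude_mul_pow hN hmono hr n).norm x).trans ?_
  simp only [norm_amplitude_mul_pow hN (zero_lt_one.trans hr).le]
  have hCn : 0 ≤ C n := (norm_nonneg _).trans (hC n 0)
  gcongr
  exact tsum_amplitude_mul_pow_le hN hmono hr n

theorem norm_iteratedDeriv_ratioSeries_zero (hN : ∀ k, 0 < N k) (hmono : Monotone (succRatio N))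
    (hr : 1 < r) (hφ : ContDiff ℝ (⊤ : ℕ∞) φ) (hC : ∀ n y, ‖iteratedDeriv n φ y‖ ≤ C n) (n : ℕ) :
    ‖iteratedDeriv n (ratioSeries r N φ) 0‖ =
      (∑' k, amplitude r N k * (r * succRatio N k) ^ n) * ‖iteratedDeriv n φ 0‖ := by
  rw [iteratedDeriv_ratioSeries hN hmono hr hφ hC,
    dilationSeries_zero (summable_amplitude_mul_pow hN hmono hr n), norm_smul, Real.norm_of_nonneg
      (tsum_nonneg (amplitude_mul_pow_nonneg hN (zero_lt_one.trans hr).le n))]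

end RatioSeries

/-- The trigonometric series construction in the proof of Lemma 2: for a log-convex
positive sequence `N` with quotients `m k = N (k+1) / N k`, the series
`g x = Σ_k (N k / (2 m k)^k) (cos (2 m k x) + sin (2 m k x))` converges, defines a
`C^∞` function with `|g^(n) x| ≤ 2^(n+2) N n`, and
`|g^(n) 0| = Σ_k N k / (2 m k)^(k - n) ≥ N n`. -/
theorem trigonometric_series_attains_bounds
    (N : ℕ → ℝ) (hNpos : ∀ k, 0 < N k)
    (hlogconv : ∀ k : ℕ, 1 ≤ k → (N k) ^ 2 ≤ N (k - 1) * N (k + 1))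
    (m : ℕ → ℝ) (hm : ∀ k, m k = N (k + 1) / N k)
    (g : ℝ → ℝ)
    (hg : ∀ x : ℝ, g x = ∑' k : ℕ,
      (N k / (2 * m k) ^ k) * (Real.cos (2 * m k * x) + Real.sin (2 * m k * x))) :
    (∀ x : ℝ, Summable (fun k : ℕ =>
      (N k / (2 * m k) ^ k) * (Real.cos (2 * m k * x) + Real.sin (2 * m k * x)))) ∧
    ContDiff ℝ (⊤ : ℕ∞) g ∧
    (∀ (n : ℕ) (x : ℝ), |iteratedDeriv n g x| ≤ 2 ^ (n + 2) * N n) ∧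
    (∀ n : ℕ, |iteratedDeriv n g 0| = ∑' k : ℕ, N k / (2 * m k) ^ ((k : ℤ) - (n : ℤ))) ∧
    (∀ n : ℕ, N n ≤ |iteratedDeriv n g 0|) := by
  obtain rfl : m = succRatio N := funext hm
  obtain rfl : g = ratioSeries 2 N (Real.cos + Real.sin) := funext hg
  have hmono := monotone_succRatio_of_logConvex hNpos hlogconv
  have hsmooth : ContDiff ℝ (⊤ : ℕ∞) (Real.cos + Real.sin) :=
    Real.contDiff_cos.add Real.contDiff_sin
  have hzero : ∀ n, |iteratedDeriv n (ratioSeries 2 N (Real.cos + Real.sin)) 0| =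
      ∑' k, amplitude 2 N k * (2 * succRatio N k) ^ n := fun n => by
    rw [← Real.norm_eq_abs, norm_iteratedDeriv_ratioSeries_zero hNpos hmono one_lt_two hsmooth
      norm_iteratedDeriv_cos_add_sin_le, norm_iteratedDeriv_cos_add_sin_zero, mul_one]
  have hbound : ∀ y, ‖(Real.cos + Real.sin) y‖ ≤ 2 := by
    simpa only [iteratedDeriv_zero] using norm_iteratedDeriv_cos_add_sin_le 0
  refine ⟨fun x => summable_ratioSeries_term hNpos hmono one_lt_two hbound x,
    contDiff_ratioSeries hNpos hmono one_lt_two hsmooth norm_iteratedDeriv_cos_add_sin_le,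
    fun n x => ?_, fun n => ?_, fun n => ?_⟩
  · refine (norm_iteratedDeriv_ratioSeries_le hNpos hmono one_lt_two hsmooth
      norm_iteratedDeriv_cos_add_sin_le n x).trans_eq ?_
    ring
  · rw [hzero]
    exact tsum_congr (amplitude_mul_pow_eq_div_zpow hNpos two_ne_zero n)
  · rw [hzero]
    exact le_tsum_amplitude_mul_pow hNpos hmono one_lt_two n
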